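/- Let γ ∈ ℝ, let q ≥ 1 and let ℓ, m be integers with ℓ ≥ 2 and m ≥ ℓ + q. Let Z_1,…,Z_{2m−1} be iid standard GP(γ) (or more generally iid with a continuous distribution). For a parameter r ∈ {1, ℓ}, let 1_{m,r,m} be the indicator of the event that Z_m is in the top-q of Z_{[1:m]} or in the top-q of Z_{[(m−r+1):(2m−r)]}. Then E[|1_{m,ℓ,m} − 1_{m,1,m}|] ≤ (q+1)q(ℓ−1)/((m+1)m). -/

import Mathlib

open MeasureTheory ProbabilityTheory Filter Real Set Topology
open scoped ENNReal NNReal Classical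

noncomputable section

/-- The `j`-th largest entry of the tuple `x` (`j = 0` gives the maximum, `j = 1` the
second largest, ...); `0` when `j` is out of range. -/
def descStat {m : ℕ} (x : Fin m → ℝ) (j : ℕ) : ℝ :=
  if h : j < m then (x ∘ Tuple.sort x) ⟨m - 1 - j, by omega⟩ else 0

/-- The kernel of degree `m` obtained from `K` by applying it to the top-`q`
(descending) order statistics: `K_m(x_1,…,x_m) = K(x_{m:m},…,x_{m−q+1:m})`. -/
def Km {q : ℕ} (K : (Fin q → ℝ) → ℝ) (m : ℕ) (x : Fin m → ℝ) : ℝ :=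
  K fun j => descStat x (j : ℕ)

/-- `K(a x_1 + b, …, a x_q + b) = K(x_1, …, x_q)` for all `a > 0`, `b ∈ ℝ`. -/
def LocScaleInvariant {q : ℕ} (K : (Fin q → ℝ) → ℝ) : Prop :=
  ∀ a b : ℝ, 0 < a → ∀ x : Fin q → ℝ, K (fun j => a * x j + b) = K x

/-- `h_γ(y) = (y^γ - 1)/γ`, interpreted as `log y` when `γ = 0`. -/
def hGamma (γ : ℝ) (y : ℝ) : ℝ := if γ = 0 then Real.log y else (y ^ γ - 1) / γ

lemma measurable_hGamma (γ : ℝ) : Measurable (hGamma γ) := by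
  unfold hGamma
  split_ifs
  · exact Real.measurable_log
  · fun_prop

/-- The uniform distribution on `(0,1)`. -/
def unif01 : Measure ℝ := volume.restrict (Set.Ioo (0:ℝ) 1)

instance : IsProbabilityMeasure unif01 := ⟨by simp [unif01]⟩

/-- The standard Pareto(1) distribution, with cdf `1 - 1/y` for `y ≥ 1`. -/
def pareto1 : Measure ℝ := ProbabilityTheory.paretoMeasure 1 1

instance : IsProbabilityMeasure pareto1 :=
  ProbabilityTheory.isProbabilityMeasure_paretoMeasure one_pos one_pos

/-- The standard generalized Pareto distribution `GP(γ)`: the law of `h_γ(Y)` for `Y`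
standard Pareto(1). -/
def gpMeasure (γ : ℝ) : Measure ℝ := pareto1.map (hGamma γ)

instance (γ : ℝ) : IsProbabilityMeasure (gpMeasure γ) :=
  Measure.isProbabilityMeasure_map (measurable_hGamma γ).aemeasurable

/-- The unit exponential distribution: the law of `-log U` for `U` uniform on `(0,1)`. -/
def expMeasure1 : Measure ℝ := unif01.map fun u => -Real.log u

instance : IsProbabilityMeasure expMeasure1 :=
  Measure.isProbabilityMeasure_map Real.measurable_log.neg.aemeasurable

/-- The Erlang(q) distribution: the law of the sum of `q` independent unit exponentials. -/
def erlangMeasure (q : ℕ) : Measure ℝ :=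
  (Measure.pi fun _ : Fin q => expMeasure1).map fun e => ∑ i, e i

instance (q : ℕ) : IsProbabilityMeasure (erlangMeasure q) :=
  Measure.isProbabilityMeasure_map
    (Finset.measurable_sum _ fun i _ => measurable_pi_apply i).aemeasurable

/-- The joint law of `r` iid `GP(γ)` random variables. -/
def gpPi (γ : ℝ) (r : ℕ) : Measure (Fin r → ℝ) := Measure.pi fun _ => gpMeasure γ

instance (γ : ℝ) (r : ℕ) : IsProbabilityMeasure (gpPi γ r) := by
  unfold gpPi; infer_instance

/-- The vector `(Z_{q-j:q-1})_{j=1}^{q}`: the descending order statistics of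
`z_1,…,z_{q-1}` with an extra last entry `Z_{0:q-1} := 0`. -/
def refVec {q : ℕ} (z : Fin (q-1) → ℝ) : Fin q → ℝ := fun j => descStat z (j : ℕ)

/-- `θ = E[K((Z_{q-j:q-1})_{j=1}^{q})]` for iid `GP(γ)` variables `Z_1,…,Z_{q-1}`. -/
def thetaK (γ : ℝ) {q : ℕ} (K : (Fin q → ℝ) → ℝ) : ℝ :=
  ∫ z, K (refVec z) ∂(gpPi γ (q-1))

/-- all moments of `K((Z_{q-j:q-1})_{j=1}^{q})` are finite. -/
def MomentCond (γ : ℝ) {q : ℕ} (K : (Fin q → ℝ) → ℝ) : Prop :=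
  ∀ p : ℝ, 0 < p →
    ∫⁻ z, ENNReal.ofReal (|K (refVec z)| ^ p) ∂(gpPi γ (q-1)) < ⊤

/-- The asymptotic variance
`σ²_K(γ) = ∫_0^∞ (E[K̄_{q+1}((Z_{q-j:q-1})_{j=1}^q, h_γ(S_q/x))])² dx`. -/
def sigmaSqK (γ : ℝ) {q : ℕ} (K : (Fin q → ℝ) → ℝ) : ℝ :=
  ∫ x in Set.Ioi (0:ℝ),
    (∫ zs : (Fin (q-1) → ℝ) × ℝ,
        (Km K (q+1) (Fin.snoc (refVec zs.1) (hGamma γ (zs.2 / x))) - thetaK γ K)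
      ∂((gpPi γ (q-1)).prod (erlangMeasure q))) ^ 2

/-- The U-statistic with kernel `K_m` evaluated on the sample `z`. -/
def UStat {q : ℕ} (K : (Fin q → ℝ) → ℝ) (m n : ℕ) (z : Fin n → ℝ) : ℝ :=
  ((n.choose m : ℝ))⁻¹ *
    ∑ I ∈ Finset.powersetCard m (Finset.univ : Finset (Fin n)),
      Km K I.card fun j => z (I.orderIsoOfFin rfl j).1

/-- Condition on the degree sequence: `m = o(n^{1-ε})` and `log n = o(m^{1-δ})`. -/
def DegreeCond (m : ℕ → ℕ) : Prop :=
  ∃ ε > (0:ℝ), ∃ δ > (0:ℝ),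
    Tendsto (fun n => (m n : ℝ) / (n : ℝ) ^ (1 - ε)) atTop (𝓝 0) ∧
    Tendsto (fun n : ℕ => Real.log n / (m n : ℝ) ^ (1 - δ)) atTop (𝓝 0)

/-- `ζ_{m,ℓ} = cov(K_m(Z_S), K_m(Z_{S'}))` for the blocks `S = [1:m]`,
`S' = [(m-ℓ+1):(2m-ℓ)]` (zero-indexed here), which overlap in `ℓ` indices. -/
def zetaCov {Ω : Type*} [MeasurableSpace Ω] (P : Measure Ω) {q : ℕ}
    (K : (Fin q → ℝ) → ℝ) (Z : ℕ → Ω → ℝ) (m ℓ : ℕ) : ℝ :=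
  (∫ ω, Km K m (fun i : Fin m => Z i ω) * Km K m (fun i : Fin m => Z (m - ℓ + i) ω) ∂P)
    - (∫ ω, Km K m (fun i : Fin m => Z i ω) ∂P)
      * (∫ ω, Km K m (fun i : Fin m => Z (m - ℓ + i) ω) ∂P)

/-- Convergence in distribution to a Gaussian, expressed via pointwise convergence of
the cumulative distribution functions (the Gaussian cdf being continuous). -/
def TendstoGaussian {Ω : Type*} [MeasurableSpace Ω] (P : Measure Ω)
    (T : ℕ → Ω → ℝ) (μ : ℝ) (v : ℝ≥0) : Prop :=
  ∀ x : ℝ, Tendsto (fun n => (P {ω | T n ω ≤ x}).toReal) atTop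
    (𝓝 ((gaussianReal μ v (Set.Iic x)).toReal))

/-- Convergence in probability to the constant `c`. -/
def TendstoInProb {Ω : Type*} [MeasurableSpace Ω] (P : Measure Ω)
    (T : ℕ → Ω → ℝ) (c : ℝ) : Prop :=
  ∀ ε : ℝ, 0 < ε → Tendsto (fun n => (P {ω | ε ≤ |T n ω - c|}).toReal) atTop (𝓝 0)


/-- `Z_i` is among the `q` largest of the values `(Z_a)_{a ∈ S}` (for `i ∈ S`):
fewer than `q` members of `S` are strictly larger. -/
def inTopQ (q : ℕ) {Ω : Type*} (Z : ℕ → Ω → ℝ) (S : Finset ℕ) (i : ℕ) (ω : Ω) : Prop :=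
  (S.filter fun a => Z i ω < Z a ω).card < q

/-- The counting variable `N_{ℓ,m}`: the number of `i ∈ [(m-ℓ+1):m]` such that `Z_i` is
in the top-`q` of `Z_{[1:m]}` or of `Z_{[(m-ℓ+1):(2m-ℓ)]}`. -/
def Ncount (q : ℕ) {Ω : Type*} (Z : ℕ → Ω → ℝ) (ℓ m : ℕ) (ω : Ω) : ℕ :=
  ((Finset.Icc (m - ℓ + 1) m).filter fun i =>
    inTopQ q Z (Finset.Icc 1 m) i ω ∨
      inTopQ q Z (Finset.Icc (m - ℓ + 1) (2 * m - ℓ)) i ω).card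

/-- The kernel `K_{|S|}` applied to the subsample `(Z_a)_{a ∈ S}`. -/
def KmOn {q : ℕ} (K : (Fin q → ℝ) → ℝ) {Ω : Type*} (Z : ℕ → Ω → ℝ)
    (S : Finset ℕ) (ω : Ω) : ℝ :=
  Km K S.card fun j => Z (S.orderIsoOfFin rfl j).1 ω

/-- `Ξ_{ℓ,m} = K_m(Z_{[1:m]}) K_m(Z_{[(m-ℓ+1):(2m-ℓ)]})`. -/
def XiRV {q : ℕ} (K : (Fin q → ℝ) → ℝ) {Ω : Type*} (Z : ℕ → Ω → ℝ)
    (ℓ m : ℕ) (ω : Ω) : ℝ :=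
  KmOn K Z (Finset.Icc 1 m) ω * KmOn K Z (Finset.Icc (m - ℓ + 1) (2 * m - ℓ)) ω


/-!
Sliding the window by one step deletes one end point of a set `S` of `m + 1` indices instead of the
other. This changes the top-`q` status of `Z_m` only if one of the two end points is pivotal:
exactly `q` of the values on `S` exceed `Z_m`, and the one at that end point is among them. By
exchangeability all `(m + 1) m` ordered pairs of distinct indices in `S` have the same probability
that the second is pivotal for the first. Without ties only one value has exactly `q` values above
it, so at most `q` pairs are pivotal at the same time and this probability is at most
`q / ((m + 1) m)`. The two end points and the `ℓ - 1` steps give `2 q (ℓ - 1) / ((m + 1) m)`, and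
`2 q ≤ (q + 1) q`.
-/

section CountAbove

variable {ι α : Type*} [LinearOrder α] {x : ι → α} {S T : Finset ι} {i a u v : ι} {q : ℕ}

/-- The number of entries of `x` indexed by `S` that are strictly larger than `x i`: the
descending rank of `x i` in `S`, counted from `0`. -/
def countAbove (x : ι → α) (S : Finset ι) (i : ι) : ℕ :=
  (S.filter fun a => x i < x a).card

lemma countAbove_mono (hST : S ⊆ T) : countAbove x S i ≤ countAbove x T i :=
  Finset.card_le_card (Finset.filter_subset_filter _ hST)

lemma countAbove_lt_countAbove (hv : v ∈ S) (huv : x u < x v) :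
    countAbove x S v < countAbove x S u := by
  refine Finset.card_lt_card (Finset.ssubset_iff_of_subset ?_ |>.2 ⟨v, by simp [hv, huv], by simp⟩)
  exact Finset.monotone_filter_right _ fun _ _ h => huv.trans h

lemma injOn_countAbove (hx : Set.InjOn x S) : Set.InjOn (countAbove x S) S := by
  intro u hu v hv huv
  by_contra hne
  rcases lt_or_gt_of_ne (hx.ne hu hv hne) with h | h
  · exact (countAbove_lt_countAbove hv h).ne' huv
  · exact (countAbove_lt_countAbove hu h).ne huv

lemma countAbove_map {κ : Type*} (f : κ ↪ ι) (S : Finset κ) (k : κ) :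
    countAbove x (S.map f) (f k) = countAbove (x ∘ f) S k := by
  rw [countAbove, Finset.filter_map, Finset.card_map]
  rfl

lemma countAbove_erase_lt_and_le_iff [DecidableEq ι] (ha : a ∈ S) :
    countAbove x (S.erase a) i < q ∧ q ≤ countAbove x S i ↔
      countAbove x S i = q ∧ x i < x a := by
  unfold countAbove
  rw [Finset.filter_erase]
  by_cases h : x i < x a
  · have hmem : a ∈ S.filter fun c => x i < x c := by simp [ha, h]
    have := Finset.card_erase_add_one hmem
    grind
  · rw [Finset.erase_eq_of_notMem (by simp [h])]
    grind

end CountAbove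

section TopSet

variable {ι α : Type*} [LinearOrder α] {S T : Finset ι} {i a b : ι} {q : ℕ}

/-- The set of tuples `x` whose entry `x i` is in the top-`q` of `(x a)_{a ∈ S}`; it is the event
behind `inTopQ`, on the space of tuples. -/
def topSet (α : Type*) [LinearOrder α] (q : ℕ) (S : Finset ι) (i : ι) : Set (ι → α) :=
  {x | countAbove x S i < q}

lemma topSet_anti (hST : S ⊆ T) : topSet α q T i ⊆ topSet α q S i :=
  fun _ hx => (countAbove_mono hST).trans_lt hx

lemma preimage_comp_topSet {κ : Type*} (f : κ ↪ ι) (S : Finset κ) (k : κ) :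
    (fun x : ι → α => x ∘ f) ⁻¹' topSet α q S k = topSet α q (S.map f) (f k) := by
  ext x
  simp [topSet, countAbove_map]

/-- The set of tuples for which `a` is pivotal for `i`: the entry `x i` is not in the top-`q` of
`S`, but it is after the deletion of `a` from `S`. -/
def pivotalSet (α : Type*) [LinearOrder α] [DecidableEq ι] (q : ℕ) (S : Finset ι) (i a : ι) :
    Set (ι → α) :=
  topSet α q (S.erase a) i \ topSet α q S i

lemma mem_pivotalSet_iff [DecidableEq ι] {x : ι → α} (ha : a ∈ S) :
    x ∈ pivotalSet α q S i a ↔ countAbove x S i = q ∧ x i < x a := by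
  rw [← countAbove_erase_lt_and_le_iff ha]
  simp [pivotalSet, topSet]

lemma symmDiff_topSet_erase_subset [DecidableEq ι] :
    symmDiff (topSet α q (S.erase a) i) (topSet α q (S.erase b) i) ⊆
      pivotalSet α q S i a ∪ pivotalSet α q S i b :=
  Set.union_subset_union
    (Set.sdiff_subset_sdiff_right (topSet_anti (S.erase_subset b)))
    (Set.sdiff_subset_sdiff_right (topSet_anti (S.erase_subset a)))

lemma preimage_comp_pivotalSet {κ : Type*} [DecidableEq ι] [DecidableEq κ] (f : κ ↪ ι)
    (S : Finset κ) (k l : κ) :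
    (fun x : ι → α => x ∘ f) ⁻¹' pivotalSet α q S k l = pivotalSet α q (S.map f) (f k) (f l) := by
  rw [pivotalSet, Set.preimage_sdiff, preimage_comp_topSet, preimage_comp_topSet,
    Finset.map_erase, pivotalSet]

-- Without ties at most one entry has exactly `q` entries above it.
lemma card_filter_mem_pivotalSet_le [DecidableEq ι] {x : ι → α} (hx : Set.InjOn x S) :
    (S.offDiag.filter fun p => x ∈ pivotalSet α q S p.1 p.2).card ≤ q := by
  have pivotal : ∀ p ∈ S.offDiag.filter fun p => x ∈ pivotalSet α q S p.1 p.2,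
      p.1 ∈ S ∧ p.2 ∈ S ∧ countAbove x S p.1 = q ∧ x p.1 < x p.2 := by
    intro p hp
    obtain ⟨hpS, hpx⟩ := Finset.mem_filter.1 hp
    obtain ⟨h1, h2, -⟩ := Finset.mem_offDiag.1 hpS
    exact ⟨h1, h2, (mem_pivotalSet_iff h2).1 hpx⟩
  by_cases hq : ∃ i ∈ S, countAbove x S i = q
  · obtain ⟨i, hi, hiq⟩ := hq
    calc _ ≤ ({i} ×ˢ S.filter fun a => x i < x a).card := by
          refine Finset.card_le_card fun p hp => ?_
          obtain ⟨h1, h2, hp1, hlt⟩ := pivotal p hp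
          obtain rfl : p.1 = i := injOn_countAbove hx h1 hi (hp1.trans hiq.symm)
          simp [h2, hlt]
      _ = q := by simpa [countAbove] using hiq
  · rw [Finset.card_eq_zero.2 (Finset.eq_empty_of_forall_notMem fun p hp => ?_)]
    · exact q.zero_le
    · obtain ⟨h1, -, hp1, -⟩ := pivotal p hp
      exact hq ⟨p.1, h1, hp1⟩

variable [TopologicalSpace α] [OrderClosedTopology α] [SecondCountableTopology α]
  [MeasurableSpace α] [OpensMeasurableSpace α]

lemma measurableSet_topSet : MeasurableSet (topSet α q S i) := by
  have hcount : Measurable fun x : ι → α => countAbove x S i := by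
    simp only [countAbove, Finset.card_filter]
    exact Finset.measurable_sum _ fun a _ => Measurable.ite
      (measurableSet_lt (measurable_pi_apply i) (measurable_pi_apply a))
      measurable_const measurable_const
  exact hcount measurableSet_Iio

lemma measurableSet_pivotalSet [DecidableEq ι] : MeasurableSet (pivotalSet α q S i a) :=
  measurableSet_topSet.diff measurableSet_topSet

end TopSet

lemma sum_measure_le_of_ae_card_filter_le {κ X : Type*} [MeasurableSpace X] {ν : Measure X}
    {s : Finset κ} {E : κ → Set X} (hE : ∀ k ∈ s, MeasurableSet (E k)) {N : ℕ}
    (hN : ∀ᵐ x ∂ν, (s.filter fun k => x ∈ E k).card ≤ N) :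
    ∑ k ∈ s, ν (E k) ≤ N * ν Set.univ :=
  calc ∑ k ∈ s, ν (E k) = ∫⁻ x, ∑ k ∈ s, (E k).indicator 1 x ∂ν := by
        rw [lintegral_finsetSum' _ fun k hk => (measurable_one.indicator (hE k hk)).aemeasurable]
        exact Finset.sum_congr rfl fun k hk => (lintegral_indicator_one (hE k hk)).symm
    _ ≤ ∫⁻ _, N ∂ν := by
        refine lintegral_mono_ae (hN.mono fun x hx => ?_)
        simpa [Set.indicator_apply] using hx
    _ = N * ν Set.univ := lintegral_const _

lemma exists_perm_map_eq_self_of_ne {ι : Type*} {S : Finset ι} {i j a b : ι}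
    (hi : i ∈ S) (ha : a ∈ S) (hia : i ≠ a) (hj : j ∈ S) (hb : b ∈ S) (hjb : j ≠ b) :
    ∃ σ : Equiv.Perm ι, S.map σ.toEmbedding = S ∧ σ i = j ∧ σ a = b := by
  obtain ⟨g, hgi, hga⟩ := MulAction.is_two_pretransitive_iff.1
    (Equiv.Perm.isMultiplyPretransitive S 2)
    (Subtype.coe_ne_coe.1 hia : (⟨i, hi⟩ : S) ≠ ⟨a, ha⟩)
    (Subtype.coe_ne_coe.1 hjb : (⟨j, hj⟩ : S) ≠ ⟨b, hb⟩)
  refine ⟨Equiv.Perm.ofSubtype g, Finset.map_perm fun c hc => ?_, ?_, ?_⟩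
  · by_contra hcS
    exact hc (Equiv.Perm.ofSubtype_apply_of_not_mem g hcS)
  · simpa [Equiv.Perm.ofSubtype_apply_of_mem g hi] using congrArg Subtype.val hgi
  · simpa [Equiv.Perm.ofSubtype_apply_of_mem g ha] using congrArg Subtype.val hga

/-- A measure on tuples is exchangeable if it is invariant under all permutations of the index
set. For the law of a sequence this is the usual notion, as finite permutations suffice. -/
def IsExchangeable {ι α : Type*} [MeasurableSpace α] (ν : Measure (ι → α)) : Prop :=
  ∀ σ : Equiv.Perm ι, ν.map (fun x => x ∘ σ) = ν

namespace IsExchangeable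

variable {ι α : Type*} [LinearOrder α] [TopologicalSpace α] [OrderClosedTopology α]
  [SecondCountableTopology α] [MeasurableSpace α] [OpensMeasurableSpace α]

section Erase

variable [DecidableEq ι] {ν : Measure (ι → α)} {S : Finset ι} {i j a b : ι}

lemma measure_pivotalSet_eq (hν : IsExchangeable ν) (q : ℕ) (hi : i ∈ S) (ha : a ∈ S)
    (hia : i ≠ a) (hj : j ∈ S) (hb : b ∈ S) (hjb : j ≠ b) :
    ν (pivotalSet α q S j b) = ν (pivotalSet α q S i a) := by
  obtain ⟨σ, hσS, rfl, rfl⟩ := exists_perm_map_eq_self_of_ne hi ha hia hj hb hjb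
  have hpre := preimage_comp_pivotalSet (α := α) (q := q) σ.toEmbedding S i a
  simp only [Equiv.coe_toEmbedding, hσS] at hpre
  rw [← hpre, ← Measure.map_apply (by fun_prop) measurableSet_pivotalSet, hν σ]

variable [IsProbabilityMeasure ν]

lemma measureReal_pivotalSet_le (hν : IsExchangeable ν)
    (hinj : ∀ᵐ x ∂ν, Set.InjOn x S) (q : ℕ) (hi : i ∈ S) (ha : a ∈ S) (hia : i ≠ a) :
    ν.real (pivotalSet α q S i a) ≤ q / (S.card * (S.card - 1)) := by
  have hsum : ∑ p ∈ S.offDiag, ν (pivotalSet α q S p.1 p.2) ≤ q := by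
    simpa using sum_measure_le_of_ae_card_filter_le (fun p _ => measurableSet_pivotalSet)
      (hinj.mono fun x hx => card_filter_mem_pivotalSet_le hx)
  have hpairs : (S.offDiag.card : ℝ) = S.card * (S.card - 1) := by
    rw [Finset.offDiag_card, Nat.cast_sub (Nat.le_mul_self _), Nat.cast_mul]
    ring
  have hpos : 0 < S.offDiag.card :=
    Finset.card_pos.2 ⟨(i, a), Finset.mem_offDiag.2 ⟨hi, ha, hia⟩⟩
  rw [Finset.sum_congr rfl fun p hp => by
      obtain ⟨hj, hb, hjb⟩ := Finset.mem_offDiag.1 hp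
      exact hν.measure_pivotalSet_eq q hi ha hia hj hb hjb,
    Finset.sum_const, nsmul_eq_mul] at hsum
  rw [← hpairs, le_div_iff₀' (by exact_mod_cast hpos)]
  simpa only [ENNReal.toReal_mul, ENNReal.toReal_natCast, Measure.real] using
    ENNReal.toReal_mono (ENNReal.natCast_ne_top q) hsum

lemma measureReal_symmDiff_topSet_erase_le (hν : IsExchangeable ν)
    (hinj : ∀ᵐ x ∂ν, Set.InjOn x S) (q : ℕ) (hi : i ∈ S) (ha : a ∈ S) (hia : i ≠ a)
    (hb : b ∈ S) (hib : i ≠ b) :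
    ν.real (symmDiff (topSet α q (S.erase a) i) (topSet α q (S.erase b) i)) ≤
      2 * (q / (S.card * (S.card - 1))) :=
  calc _ ≤ _ := measureReal_mono symmDiff_topSet_erase_subset
    _ ≤ _ := measureReal_union_le _ _
    _ ≤ _ := add_le_add (hν.measureReal_pivotalSet_le hinj q hi ha hia)
      (hν.measureReal_pivotalSet_le hinj q hi hb hib)
    _ = _ := (two_mul _).symm

end Erase

section Window

variable {ν : Measure (ℕ → α)} [IsProbabilityMeasure ν] {m : ℕ}

lemma measureReal_symmDiff_topSet_Icc_succ_le (hν : IsExchangeable ν)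
    (hinj : ∀ᵐ x ∂ν, Function.Injective x) (q : ℕ) {r : ℕ} (hr : 1 ≤ r) (hrm : r < m) :
    ν.real (symmDiff (topSet α q (Finset.Icc (m - r + 1) (2 * m - r)) m)
        (topSet α q (Finset.Icc (m - (r + 1) + 1) (2 * m - (r + 1))) m)) ≤
      2 * (q / ((m + 1) * m)) := by
  have hleft : Finset.Icc (m - r + 1) (2 * m - r) =
      (Finset.Icc (m - r) (2 * m - r)).erase (m - r) := by grind
  have hright : Finset.Icc (m - (r + 1) + 1) (2 * m - (r + 1)) =
      (Finset.Icc (m - r) (2 * m - r)).erase (2 * m - r) := by grind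
  have hcard : (Finset.Icc (m - r) (2 * m - r)).card = m + 1 := by
    rw [Nat.card_Icc]
    omega
  rw [hleft, hright]
  refine (hν.measureReal_symmDiff_topSet_erase_le (hinj.mono fun x hx => hx.injOn) q
    ?_ ?_ ?_ ?_ ?_).trans_eq (by simp [hcard])
  all_goals grind

lemma measureReal_symmDiff_topSet_Icc_le (hν : IsExchangeable ν)
    (hinj : ∀ᵐ x ∂ν, Function.Injective x) (q : ℕ) {k ℓ : ℕ} (hk : 1 ≤ k) (hkℓ : k ≤ ℓ)
    (hℓm : ℓ ≤ m) :
    ν.real (symmDiff (topSet α q (Finset.Icc (m - k + 1) (2 * m - k)) m)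
        (topSet α q (Finset.Icc (m - ℓ + 1) (2 * m - ℓ)) m)) ≤
      2 * q * (ℓ - k) / ((m + 1) * m) := by
  let window (r : ℕ) : MeasuredSets ν :=
    ⟨topSet α q (Finset.Icc (m - r + 1) (2 * m - r)) m, measurableSet_topSet⟩
  have hdist : dist (window k) (window ℓ) ≤
      ∑ _r ∈ Finset.Ico k ℓ, 2 * ((q : ℝ) / ((m + 1) * m)) :=
    dist_le_Ico_sum_of_dist_le hkℓ fun hkr hrℓ =>
      hν.measureReal_symmDiff_topSet_Icc_succ_le hinj q (hk.trans hkr) (hrℓ.trans_le hℓm)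
  refine hdist.trans_eq ?_
  rw [Finset.sum_const, Nat.card_Ico, nsmul_eq_mul, Nat.cast_sub hkℓ]
  ring

end Window

end IsExchangeable

section Iid

variable {Ω ι α : Type*} [MeasurableSpace Ω] {P : Measure Ω} [MeasurableSpace α]

lemma isExchangeable_map_of_iIndepFun {Z : ι → Ω → α} (hZ : ∀ i, Measurable (Z i))
    (hindep : iIndepFun Z P) {μ : Measure α} (hμ : ∀ i, P.map (Z i) = μ) :
    IsExchangeable (P.map fun ω i => Z i ω) := by
  intro σ
  have hlaw := (hindep.precomp σ.injective).map_fun_eq_infinitePi_map fun i => hZ (σ i)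
  rw [Measure.map_map (by fun_prop) (by fun_prop), hindep.map_fun_eq_infinitePi_map hZ]
  simp only [Function.comp_def, hμ] at hlaw ⊢
  exact hlaw

lemma ae_ne_of_indepFun [MeasurableEq α] [IsFiniteMeasure P] {X Y : Ω → α}
    (hX : AEMeasurable X P) (hY : AEMeasurable Y P) (hXY : IndepFun X Y P)
    [NullSingletonClass (P.map Y)] : ∀ᵐ ω ∂P, X ω ≠ Y ω := by
  have hne : MeasurableSet {p : α × α | p.1 ≠ p.2} := measurableSet_diagonal.compl
  refine ae_of_ae_map (hX.prodMk hY) (p := fun p => p.1 ≠ p.2) ?_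
  rw [hXY.map_prod_eq_prod_map_map hX hY, Measure.ae_prod_iff_ae_ae hne]
  exact ae_of_all _ fun x => (Measure.ae_ne _ x).mono fun _ => Ne.symm

lemma ae_injective_of_iIndepFun [MeasurableEq α] [IsFiniteMeasure P] [Countable ι]
    {Z : ι → Ω → α} (hZ : ∀ i, AEMeasurable (Z i) P) (hindep : iIndepFun Z P)
    [∀ i, NullSingletonClass (P.map (Z i))] : ∀ᵐ ω ∂P, Function.Injective fun i => Z i ω := by
  have hne : ∀ᵐ ω ∂P, ∀ i j, i ≠ j → Z i ω ≠ Z j ω := by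
    simp only [ae_all_iff]
    exact fun i j hij => ae_ne_of_indepFun (hZ i) (hZ j) (hindep.indepFun hij)
  filter_upwards [hne] with ω hω i j hij
  exact not_imp_not.1 (hω i j) hij

lemma measurableSet_injective [MeasurableEq α] [Countable ι] :
    MeasurableSet {x : ι → α | Function.Injective x} := by
  unfold Function.Injective
  measurability

end Iid

lemma union_symmDiff_union_left_subset {X : Type*} (s t u : Set X) :
    symmDiff (s ∪ t) (s ∪ u) ⊆ symmDiff t u := by
  simpa using Set.union_symmDiff_union_subset (s := s) (t := t) (u := s) (v := u)

theorem indicator_difference_bound_general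
    {Ω : Type*} [MeasurableSpace Ω] (P : Measure Ω) [IsProbabilityMeasure P]
    (q ℓ m : ℕ) (hℓ : 1 ≤ ℓ) (hℓm : ℓ ≤ m)
    (Z : ℕ → Ω → ℝ) (hZ : ∀ i, Measurable (Z i))
    (hexch : IsExchangeable (P.map fun ω i => Z i ω))
    (hinj : ∀ᵐ ω ∂P, Function.Injective fun i => Z i ω) :
    P.real (symmDiff
        {ω | inTopQ q Z (Finset.Icc 1 m) m ω ∨
            inTopQ q Z (Finset.Icc (m - ℓ + 1) (2 * m - ℓ)) m ω}
        {ω | inTopQ q Z (Finset.Icc 1 m) m ω ∨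
            inTopQ q Z (Finset.Icc (m - 1 + 1) (2 * m - 1)) m ω})
      ≤ 2 * q * (ℓ - 1) / ((m + 1) * m) := by
  have hZ' : Measurable fun ω i => Z i ω := measurable_pi_lambda _ hZ
  have : IsProbabilityMeasure (P.map fun ω i => Z i ω) :=
    Measure.isProbabilityMeasure_map hZ'.aemeasurable
  have hinj' : ∀ᵐ x ∂P.map fun ω i => Z i ω, Function.Injective x := by
    refine (ae_map_iff hZ'.aemeasurable ?_).2 hinj
    exact measurableSet_injective
  calc _ ≤ (P.map fun ω i => Z i ω).real
          (symmDiff (topSet ℝ q (Finset.Icc (m - 1 + 1) (2 * m - 1)) m)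
            (topSet ℝ q (Finset.Icc (m - ℓ + 1) (2 * m - ℓ)) m)) := by
        rw [map_measureReal_apply hZ' (measurableSet_topSet.symmDiff measurableSet_topSet),
          symmDiff_comm]
        exact measureReal_mono (union_symmDiff_union_left_subset {ω | inTopQ q Z _ m ω}
          {ω | inTopQ q Z _ m ω} {ω | inTopQ q Z _ m ω})
    _ ≤ 2 * q * (ℓ - 1) / ((m + 1) * m) := by
        simpa using hexch.measureReal_symmDiff_topSet_Icc_le hinj' q le_rfl hℓ hℓm

/-- Lemma: difference of the indicators.
For iid random variables with a continuous (atomless) common distribution,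
`E[|1_{m,ℓ,m} - 1_{m,1,m}|] ≤ (q+1)q(ℓ-1)/((m+1)m)`; here
`E[|1_A - 1_B|] = P(A Δ B)`. -/
theorem indicator_difference_bound
    {Ω : Type*} [MeasurableSpace Ω] (P : Measure Ω) [IsProbabilityMeasure P]
    (q ℓ m : ℕ) (hq : 1 ≤ q) (hℓ : 2 ≤ ℓ) (hm : ℓ + q ≤ m)
    (Z : ℕ → Ω → ℝ) (hZmeas : ∀ i, Measurable (Z i))
    (hIndep : iIndepFun Z P)
    (μ : Measure ℝ) (hDist : ∀ i, Measure.map (Z i) P = μ)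
    (hCont : ∀ x : ℝ, μ {x} = 0) :
    (P (symmDiff
        {ω | inTopQ q Z (Finset.Icc 1 m) m ω ∨
            inTopQ q Z (Finset.Icc (m - ℓ + 1) (2 * m - ℓ)) m ω}
        {ω | inTopQ q Z (Finset.Icc 1 m) m ω ∨
            inTopQ q Z (Finset.Icc (m - 1 + 1) (2 * m - 1)) m ω})).toReal
      ≤ ((q : ℝ) + 1) * (q : ℝ) * ((ℓ : ℝ) - 1) / (((m : ℝ) + 1) * (m : ℝ)) := by
  have : NullSingletonClass μ := ⟨hCont⟩
  have (i : ℕ) : NullSingletonClass (P.map (Z i)) := by rwa [hDist i]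
  refine (indicator_difference_bound_general P q ℓ m (by omega) (by omega) Z hZmeas
    (isExchangeable_map_of_iIndepFun hZmeas hIndep hDist)
    (ae_injective_of_iIndepFun (fun i => (hZmeas i).aemeasurable) hIndep)).trans ?_
  have : (1 : ℝ) ≤ q := by exact_mod_cast hq
  have : (1 : ℝ) ≤ ℓ := by exact_mod_cast one_le_two.trans hℓ
  gcongr
  linarith

end
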